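/- Under the hypotheses of the reconstruction lemma, every element s = (s_l, s_r) of S with s_l = Σ_i γ_i e_i satisfies s_r ∈ V_γ, i.e., f(0, Σ_i γ_i v_i) = f(0, s_r). -/

import Mathlib

/-- Under the hypotheses of the reconstruction lemma, every element
`s = (s_l, s_r) ∈ S` with `s_l = Σ γ_i e_i` satisfies `s_r ∈ V_γ`, i.e.
`f(0, Σ γ_i v_i) = f(0, s_r)`. -/
theorem stmt13 {a t k : ℕ} {B : Type*}
    (f : (Fin a → ZMod 2) × (Fin t → ZMod 2) → B)
    (S : AddSubgroup ((Fin a → ZMod 2) × (Fin t → ZMod 2)))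
    (hf : ∀ x y, f x = f y ↔ x + y ∈ S)
    (e : Fin k → (Fin a → ZMod 2))
    (he_indep : LinearIndependent (ZMod 2) e)
    (he_span : ∀ x : Fin a → ZMod 2,
      (∃ b, (x, b) ∈ S) ↔ x ∈ Submodule.span (ZMod 2) (Set.range e))
    (v : Fin k → (Fin t → ZMod 2))
    (hv : ∀ i, f (0, v i) = f (e i, 0)) :
    ∀ γ : Fin k → ZMod 2, ∀ p ∈ S, p.1 = ∑ i, γ i • e i →
      f (0, ∑ i, γ i • v i) = f (0, p.2) := by
  intro γ p hp h
  have hmem : ∀ i, (e i, v i) ∈ S := fun i => by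
    simpa using (hf _ _).1 (hv i)
  -- An additive subgroup is closed under scalars from `ZMod 2`.
  have hsum : ∑ i, γ i • (e i, v i) ∈ S :=
    sum_mem fun i _ => ZMod.smul_mem (hmem i) (γ i)
  rw [hf]
  convert S.add_mem hsum hp using 1
  ext j
  -- In characteristic two the left components, both equal to `∑ i, γ i • e i`, cancel.
  · simp [Prod.fst_sum, h, CharTwo.add_self_eq_zero]
  · simp [Prod.snd_sum]
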